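/- arXiv:2406.18106 — 2 statements merged into one kernel-verified Lean document; each statement's English description precedes it below -/
import Mathlib

section
/- Let r > 0 and let g : ℝ³ → ℝ be real analytic on the open ball B(0,r) ⊆ ℝ³ centered at the origin. If g vanishes at every point of (image of f) ∩ B(0,r), where f is the Whitney umbrella map f(x,y) = (x², x·y, y), then g(u,0,0) = 0 for every real u with |u| < r. -/
/-!
Restricted to the `u`-axis, `g` becomes an analytic function of one variable on the interval
`(-r, r)`. It vanishes on `[0, r)` because `(u, 0, 0) = whitneyUmbrella (√u, 0)` for `u ≥ 0`, so near
`r / 2`, and hence it vanishes on the whole interval by the identity theorem.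
-/

/-- Points of `ℝ³` (as the Euclidean space `EuclideanSpace ℝ (Fin 3)`). -/
noncomputable def pt3 (u v w : ℝ) : EuclideanSpace ℝ (Fin 3) :=
  (WithLp.equiv 2 (Fin 3 → ℝ)).symm ![u, v, w]

/-- The Whitney umbrella map `f(x,y) = (x², x·y, y)` with target `ℝ³`. -/
noncomputable def whitneyUmbrella : ℝ × ℝ → EuclideanSpace ℝ (Fin 3) :=
  fun p => pt3 (p.1 ^ 2) (p.1 * p.2) p.2

theorem pt3_axis_eq_smul (u : ℝ) : pt3 u 0 0 = u • pt3 1 0 0 := by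
  ext i
  fin_cases i <;> simp [pt3]

theorem pt3_axis_mem_ball {r u : ℝ} : pt3 u 0 0 ∈ Metric.ball 0 r ↔ |u| < r := by
  simp [pt3, EuclideanSpace.norm_eq, Fin.sum_univ_three, Real.sqrt_sq_eq_abs]

theorem pt3_axis_mem_range {u : ℝ} (hu : 0 ≤ u) : pt3 u 0 0 ∈ Set.range whitneyUmbrella :=
  ⟨(√u, 0), by simp [whitneyUmbrella, Real.sq_sqrt hu]⟩

/-- If `g` is real analytic on the open ball `B(0,r) ⊆ ℝ³` and vanishes on
`(image of the Whitney umbrella) ∩ B(0,r)`, then `g(u,0,0) = 0` for all `|u| < r`. -/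
theorem analytic_vanishing_on_whitneyUmbrella_image_ball
    (r : ℝ) (hr : 0 < r) (g : EuclideanSpace ℝ (Fin 3) → ℝ)
    (hg : AnalyticOnNhd ℝ g (Metric.ball 0 r))
    (hvan : ∀ q ∈ Set.range whitneyUmbrella ∩ Metric.ball 0 r, g q = 0) :
    ∀ u : ℝ, |u| < r → g (pt3 u 0 0) = 0 := by
  intro u hu
  have haxis : AnalyticOnNhd ℝ (fun t : ℝ => pt3 t 0 0) (Set.Ioo (-r) r) := by
    rw [funext pt3_axis_eq_smul]
    exact fun t _ => analyticAt_id.smul analyticAt_const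
  have hh : AnalyticOnNhd ℝ (fun t : ℝ => g (pt3 t 0 0)) (Set.Ioo (-r) r) :=
    hg.comp haxis fun t ht => pt3_axis_mem_ball.2 (abs_lt.2 ht)
  have hzero : (fun t : ℝ => g (pt3 t 0 0)) =ᶠ[nhds (r / 2)] 0 := by
    filter_upwards [Ioo_mem_nhds (half_pos hr) (half_lt_self hr)] with t ht
    exact hvan _ ⟨pt3_axis_mem_range ht.1.le,
      pt3_axis_mem_ball.2 (by rw [abs_of_pos ht.1]; exact ht.2)⟩
  exact hh.eqOn_zero_of_preconnected_of_eventuallyEq_zero isPreconnected_Ioo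
    (⟨by linarith, by linarith⟩ : r / 2 ∈ Set.Ioo (-r) r) hzero (abs_lt.1 hu)
end

section
/- Let r > 0 and let g : ℝ³ → ℝ be real analytic on the open ball B(0,r) ⊆ ℝ³. If g vanishes at every point of D ∩ B(0,r), where D is the critical value set of the swallowtail map F(x,y,z) = (x⁴ + y·x² + z·x, y, z) (i.e., D = F({(x,y,z) : 4x³ + 2y·x + z = 0})), then g(−y²/4, y, 0) = 0 for every y ∈ ℝ (of either sign) such that (−y²/4, y, 0) ∈ B(0,r). -/
/-- The critical value set `D` of the swallowtail map
`F(x,y,z) = (x⁴ + y·x² + z·x, y, z)`, i.e. the image under `F` of the critical set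
`{(x,y,z) : 4x³ + 2y·x + z = 0}`, viewed in `ℝ³`. -/
noncomputable def swallowtailDiscriminant : Set (EuclideanSpace ℝ (Fin 3)) :=
  {q | ∃ x y z : ℝ, 4 * x ^ 3 + 2 * y * x + z = 0 ∧
        q = pt3 (x ^ 4 + y * x ^ 2 + z * x) y z}

theorem pt3_mem_ball_iff {r : ℝ} (hr : 0 < r) (u v w : ℝ) :
    pt3 u v w ∈ Metric.ball (0 : EuclideanSpace ℝ (Fin 3)) r ↔ u ^ 2 + v ^ 2 + w ^ 2 < r ^ 2 := by
  rw [mem_ball_zero_iff, ← sq_lt_sq₀ (norm_nonneg _) hr.le, EuclideanSpace.norm_sq_eq]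
  simp [pt3, Fin.sum_univ_three]

theorem doubleCurve_mem_discriminant {y : ℝ} (hy : y ≤ 0) :
    pt3 (-y ^ 2 / 4) y 0 ∈ swallowtailDiscriminant := by
  have hx : √(-y / 2) ^ 2 = -y / 2 := Real.sq_sqrt (by linarith)
  refine ⟨√(-y / 2), y, 0, ?_, ?_⟩
  · linear_combination 4 * √(-y / 2) * hx
  · congr 1
    linear_combination -(√(-y / 2) ^ 2 + y / 2) * hx

theorem analyticAt_doubleCurve (y : ℝ) :
    AnalyticAt ℝ (fun t : ℝ => pt3 (-t ^ 2 / 4) t 0) y := by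
  have h : AnalyticAt ℝ (fun t : ℝ => ![-t ^ 2 / 4, t, 0]) y := by
    rw [analyticAt_pi_iff]
    intro i
    fin_cases i
    · change AnalyticAt ℝ (fun t : ℝ => -t ^ 2 / 4) y
      fun_prop
    · exact analyticAt_id
    · exact analyticAt_const
  exact ((EuclideanSpace.equiv (Fin 3) ℝ).symm.toContinuousLinearMap.analyticAt _).comp h

/-- If `g` is real analytic on the open ball `B(0,r) ⊆ ℝ³` and vanishes on
`D ∩ B(0,r)` for the swallowtail critical value set `D`, then `g(−y²/4, y, 0) = 0`
for every `y` (of either sign) with `(−y²/4, y, 0) ∈ B(0,r)`. -/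
theorem analytic_vanishing_on_swallowtail_discriminant_ball
    (r : ℝ) (hr : 0 < r) (g : EuclideanSpace ℝ (Fin 3) → ℝ)
    (hg : AnalyticOnNhd ℝ g (Metric.ball 0 r))
    (hvan : ∀ q ∈ swallowtailDiscriminant ∩ Metric.ball 0 r, g q = 0) :
    ∀ y : ℝ, pt3 (-y ^ 2 / 4) y 0 ∈ Metric.ball (0 : EuclideanSpace ℝ (Fin 3)) r →
      g (pt3 (-y ^ 2 / 4) y 0) = 0 := by
  intro y hy
  have h_zero : ∀ t ≤ 0, pt3 (-t ^ 2 / 4) t 0 ∈ Metric.ball (0 : EuclideanSpace ℝ (Fin 3)) r →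
      g (pt3 (-t ^ 2 / 4) t 0) = 0 :=
    fun t ht hb => hvan _ ⟨doubleCurve_mem_discriminant ht, hb⟩
  rcases le_total y 0 with h | h
  · exact h_zero y h hy
  have h_seg : ∀ t ∈ Set.Icc 0 y,
      pt3 (-t ^ 2 / 4) t 0 ∈ Metric.ball (0 : EuclideanSpace ℝ (Fin 3)) r := by
    rintro t ⟨ht0, hty⟩
    rw [pt3_mem_ball_iff hr] at hy ⊢
    have h2 : t ^ 2 ≤ y ^ 2 := by gcongr
    have h4 : (t ^ 2) ^ 2 ≤ (y ^ 2) ^ 2 := by gcongr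
    nlinarith
  have h_an : AnalyticOnNhd ℝ (fun t : ℝ => g (pt3 (-t ^ 2 / 4) t 0)) (Set.Icc 0 y) :=
    fun t ht => AnalyticAt.fun_comp (f := fun t : ℝ => pt3 (-t ^ 2 / 4) t 0)
      (hg _ (h_seg t ht)) (analyticAt_doubleCurve t)
  have h0 : (0 : ℝ) ∈ Set.Icc 0 y := ⟨le_rfl, h⟩
  have h_near : ∀ᶠ t in nhds (0 : ℝ),
      pt3 (-t ^ 2 / 4) t 0 ∈ Metric.ball (0 : EuclideanSpace ℝ (Fin 3)) r :=
    (analyticAt_doubleCurve 0).continuousAt.eventually_mem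
      (Metric.isOpen_ball.mem_nhds (h_seg 0 h0))
  have h_left : ∀ᶠ t in nhdsWithin (0 : ℝ) (Set.Iio 0), g (pt3 (-t ^ 2 / 4) t 0) = 0 := by
    filter_upwards [h_near.filter_mono nhdsWithin_le_nhds, self_mem_nhdsWithin] with t ht hneg
    exact h_zero t (le_of_lt hneg) ht
  have h_freq : ∃ᶠ t in nhdsWithin (0 : ℝ) {0}ᶜ, g (pt3 (-t ^ 2 / 4) t 0) = 0 :=
    h_left.frequently.filter_mono (nhdsWithin_mono _ fun t ht => ne_of_lt ht)
  exact h_an.eqOn_zero_of_preconnected_of_frequently_eq_zero isPreconnected_Icc h0 h_freq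
    ⟨h, le_rfl⟩
end
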